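/- arXiv:2104.06567 — 2 statements merged into one kernel-verified Lean document; each statement's English description precedes it below -/
import Mathlib

section
/- Special case of the discrete Hardy inequality: if (b_n)_{n≥1} is a nonnegative decreasing sequence and a_n = (Σ_{k=n+1}^∞ b_k²)^{1/2}, then for any 0 < r < 2 and 0 < q ≤ ∞, the sequence (a_n / (n+1)^{1/2})_{n≥0} satisfies ‖(a_n/(n+1)^{1/2})‖_{ℓ_{r,q}} ≲ ‖(b_n)‖_{ℓ_{r,q}}, with implied constant depending only on r and q. -/
open MeasureTheory ENNReal

noncomputable section

/-- Lorentz sequence quasinorm `ℓ_{p,q}` of a nonnegative (already decreasing) sequence,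
indexed from `n = 1` (so `x n` stands for `x_{n+1}`). -/
def lorentzNorm (p : ℝ) (q : ℝ≥0∞) (x : ℕ → ℝ≥0∞) : ℝ≥0∞ :=
  if q = ∞ then ⨆ n : ℕ, ENNReal.ofReal (((n : ℝ) + 1) ^ (1 / p)) * x n
  else (∑' n : ℕ,
      (ENNReal.ofReal (((n : ℝ) + 1) ^ (1 / p - 1 / q.toReal)) * x n) ^ q.toReal) ^
    (1 / q.toReal)

/-- The `ℓ_p` quasinorm of a nonnegative sequence. -/
def lpSeqNorm (p : ℝ) (b : ℕ → ℝ) : ℝ≥0∞ :=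
  (∑' n : ℕ, ENNReal.ofReal (b n ^ p)) ^ (1 / p)

/-!
For antitone `x`, splitting the tail at the indices `2 ^ j * (n + 1)` gives
`∑ k, x (n + k) ^ p ≤ (n + 1) * ∑ j, 2 ^ j * (dilate (2 ^ j) x n) ^ p`, so the normalized tail is
at most the pointwise `ℓ_p` sum over `j` of `2 ^ (j / p) • dilate (2 ^ j) x`. Dilation by `L` has
norm `O(L ^ (-1 / r))` on antitone sequences of `ℓ_{r,q}`, so the norms of these terms decay like
`2 ^ (j * (1 / p - 1 / r))`, geometrically because `r < p`; a geometrically decaying family in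
`ℓ_{r,q}` can be summed in `ℓ_p` for every `q`.
-/

/-- The subsequence `x_L, x_{2L}, x_{3L}, …` of a sequence `x_1, x_2, …`, where `x n` stands for
`x_{n+1}` as in `lorentzNorm`. The truncated subtraction makes `dilate 0 x` constant. -/
def dilate {α : Type*} (L : ℕ) (x : ℕ → α) : ℕ → α := fun n => x (L * (n + 1) - 1)

lemma ofReal_natCast_add_one_rpow (n : ℕ) (e : ℝ) :
    ENNReal.ofReal (((n : ℝ) + 1) ^ e) = ((n : ℝ≥0∞) + 1) ^ e := by
  rw [← ENNReal.ofReal_rpow_of_pos (by positivity), ENNReal.ofReal_add (by positivity) zero_le_one,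
    ENNReal.ofReal_natCast, ENNReal.ofReal_one]

lemma rpow_le_max_one_rpow_mul_rpow (s : ℝ) {c x y : ℝ≥0∞} (hyx : y ≤ x) (hxy : x ≤ c * y) :
    x ^ s ≤ max 1 (c ^ s) * y ^ s := by
  rcases le_total 0 s with hs | hs
  · calc x ^ s ≤ (c * y) ^ s := ENNReal.rpow_le_rpow hxy hs
      _ = c ^ s * y ^ s := ENNReal.mul_rpow_of_nonneg _ _ hs
      _ ≤ max 1 (c ^ s) * y ^ s := by gcongr; exact le_max_right _ _
  · calc x ^ s ≤ y ^ s := by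
          simpa only [ENNReal.rpow_neg, inv_inv] using
            ENNReal.inv_le_inv.2 (ENNReal.rpow_le_rpow hyx (neg_nonneg.2 hs))
      _ ≤ max 1 (c ^ s) * y ^ s := le_mul_of_one_le_left' (le_max_left _ _)

lemma iSup_rpow_le_tsum_rpow {ι : Type*} {p : ℝ} (hp : 0 < p) (x : ι → ℝ≥0∞) :
    (⨆ j, x j) ^ p ≤ ∑' j, x j ^ p := by
  have h := (ENNReal.orderIsoRpow p hp).map_iSup x
  simp only [ENNReal.orderIsoRpow_apply] at h
  exact h.trans_le (iSup_le ENNReal.le_tsum)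

lemma tsum_rpow_le_of_le_geometric {p : ℝ} (hp : 0 ≤ p) {c A : ℝ≥0∞} {x : ℕ → ℝ≥0∞}
    (hx : ∀ j, x j ≤ c ^ j * A) : ∑' j, x j ^ p ≤ (1 - c ^ p)⁻¹ * A ^ p :=
  calc ∑' j, x j ^ p ≤ ∑' j, (c ^ p) ^ j * A ^ p := by
        gcongr with j
        calc x j ^ p ≤ (c ^ j * A) ^ p := ENNReal.rpow_le_rpow (hx j) hp
          _ = (c ^ p) ^ j * A ^ p := by
            rw [ENNReal.mul_rpow_of_nonneg _ _ hp, ← ENNReal.rpow_natCast_mul, mul_comm (j : ℝ),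
              ENNReal.rpow_mul_natCast]
    _ = (1 - c ^ p)⁻¹ * A ^ p := by rw [ENNReal.tsum_mul_right, ENNReal.tsum_geometric]

lemma inv_one_sub_rpow_ne_top {p : ℝ} (hp : 0 < p) {c : ℝ≥0∞} (hc : c < 1) :
    (1 - c ^ p)⁻¹ ≠ ∞ :=
  ENNReal.inv_ne_top.2 (tsub_pos_of_lt (ENNReal.rpow_lt_one hc hp)).ne'

section LorentzNorm

variable {r : ℝ} {q : ℝ≥0∞}

lemma lorentzNorm_top (r : ℝ) (x : ℕ → ℝ≥0∞) :
    lorentzNorm r ∞ x = ⨆ n : ℕ, ((n : ℝ≥0∞) + 1) ^ (1 / r) * x n := by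
  simp only [lorentzNorm, if_true, ofReal_natCast_add_one_rpow]

lemma lorentzNorm_rpow_toReal (r : ℝ) (hq0 : q ≠ 0) (hq : q ≠ ∞) (x : ℕ → ℝ≥0∞) :
    lorentzNorm r q x ^ q.toReal =
      ∑' n : ℕ, ((n : ℝ≥0∞) + 1) ^ (q.toReal / r - 1) * x n ^ q.toReal := by
  have hp : 0 < q.toReal := ENNReal.toReal_pos hq0 hq
  have hexp : (1 / r - 1 / q.toReal) * q.toReal = q.toReal / r - 1 := by field_simp
  simp only [lorentzNorm, if_neg hq, one_div q.toReal, ENNReal.rpow_inv_rpow hp.ne']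
  simp only [ofReal_natCast_add_one_rpow, ENNReal.mul_rpow_of_nonneg _ _ hp.le,
    ← ENNReal.rpow_mul, ← one_div, hexp]

lemma lorentzNorm_mono {x y : ℕ → ℝ≥0∞} (hxy : ∀ n, x n ≤ y n) :
    lorentzNorm r q x ≤ lorentzNorm r q y := by
  unfold lorentzNorm
  split_ifs <;> gcongr <;> exact hxy _

lemma lorentzNorm_const_mul (hq0 : q ≠ 0) (a : ℝ≥0∞) (x : ℕ → ℝ≥0∞) :
    lorentzNorm r q (fun n => a * x n) = a * lorentzNorm r q x := by
  rcases eq_or_ne q ∞ with rfl | hq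
  · simp only [lorentzNorm_top, ENNReal.mul_iSup, mul_left_comm]
  · have hp : 0 < q.toReal := ENNReal.toReal_pos hq0 hq
    apply ENNReal.rpow_left_injective hp.ne'
    simp only [ENNReal.mul_rpow_of_nonneg _ _ hp.le, lorentzNorm_rpow_toReal r hq0 hq,
      ← ENNReal.tsum_mul_left, mul_left_comm]

lemma lorentzNorm_top_iSup_le {ι : Type*} (x : ι → ℕ → ℝ≥0∞) :
    lorentzNorm r ∞ (fun n => ⨆ j, x j n) ≤ ⨆ j, lorentzNorm r ∞ (x j) := by
  simp only [lorentzNorm_top, ENNReal.mul_iSup]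
  rw [iSup_comm]

lemma lorentzNorm_iSup_rpow_le {ι : Type*} (hq0 : q ≠ 0) (hq : q ≠ ∞) (x : ι → ℕ → ℝ≥0∞) :
    lorentzNorm r q (fun n => ⨆ j, x j n) ^ q.toReal ≤ ∑' j, lorentzNorm r q (x j) ^ q.toReal := by
  simp only [lorentzNorm_rpow_toReal r hq0 hq]
  rw [ENNReal.tsum_comm]
  gcongr with n
  rw [ENNReal.tsum_mul_left]
  gcongr
  exact iSup_rpow_le_tsum_rpow (ENNReal.toReal_pos hq0 hq) _

lemma exists_lorentzNorm_iSup_le_of_le_geometric (r : ℝ) (hq0 : q ≠ 0) {c : ℝ≥0∞} (hc : c < 1) :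
    ∃ K ≠ ∞, ∀ (x : ℕ → ℕ → ℝ≥0∞) (A : ℝ≥0∞), (∀ j, lorentzNorm r q (x j) ≤ c ^ j * A) →
      lorentzNorm r q (fun n => ⨆ j, x j n) ≤ K * A := by
  rcases eq_or_ne q ∞ with rfl | hq
  · refine ⟨1, ENNReal.one_ne_top, fun x A hx => (lorentzNorm_top_iSup_le x).trans ?_⟩
    exact iSup_le fun j => (hx j).trans (by gcongr; exact pow_le_one' hc.le j)
  · have hp : 0 < q.toReal := ENNReal.toReal_pos hq0 hq
    refine ⟨((1 - c ^ q.toReal)⁻¹) ^ q.toReal⁻¹, ENNReal.rpow_ne_top_of_nonneg (by positivity)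
      (inv_one_sub_rpow_ne_top hp hc), fun x A hx => (ENNReal.rpow_le_rpow_iff hp).1 ?_⟩
    rw [ENNReal.mul_rpow_of_nonneg _ _ hp.le, ENNReal.rpow_inv_rpow hp.ne']
    exact (lorentzNorm_iSup_rpow_le hq0 hq x).trans (tsum_rpow_le_of_le_geometric hp.le hx)

lemma exists_tsum_rpow_le_iSup {p : ℝ} (hp : 0 < p) {c : ℝ≥0∞} (hc0 : c ≠ 0) (hc : c < 1) :
    ∃ K ≠ ∞, ∀ x : ℕ → ℝ≥0∞, (∑' j, x j ^ p) ^ (1 / p) ≤ K * ⨆ j, c⁻¹ ^ j * x j := by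
  refine ⟨((1 - c ^ p)⁻¹) ^ p⁻¹, ENNReal.rpow_ne_top_of_nonneg (by positivity)
    (inv_one_sub_rpow_ne_top hp hc), fun x => (ENNReal.rpow_le_rpow_iff hp).1 ?_⟩
  rw [ENNReal.mul_rpow_of_nonneg _ _ hp.le, one_div, ENNReal.rpow_inv_rpow hp.ne',
    ENNReal.rpow_inv_rpow hp.ne']
  refine tsum_rpow_le_of_le_geometric hp.le fun j => ?_
  have hcancel : c ^ j * (c⁻¹ ^ j * x j) = x j := by
    rw [← mul_assoc, ← mul_pow, ENNReal.mul_inv_cancel hc0 hc.ne_top, one_pow, one_mul]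
  exact hcancel.symm.trans_le (by gcongr; exact le_iSup (fun j => c⁻¹ ^ j * x j) j)

-- Half of the geometric decay pays for replacing the `ℓ_p` sum by a supremum, the other half
-- for taking the norm of the supremum, so no triangle inequality in `ℓ_{r,q}` is needed.
lemma exists_lorentzNorm_tsum_rpow_le_of_le_geometric (r : ℝ) (hq0 : q ≠ 0) {p : ℝ} (hp : 0 < p)
    {c : ℝ≥0∞} (hc0 : c ≠ 0) (hc : c < 1) :
    ∃ K ≠ ∞, ∀ (x : ℕ → ℕ → ℝ≥0∞) (A : ℝ≥0∞), (∀ j, lorentzNorm r q (x j) ≤ c ^ j * A) →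
      lorentzNorm r q (fun n => (∑' j, x j n ^ p) ^ (1 / p)) ≤ K * A := by
  obtain ⟨d, hdd, hd0, hd⟩ : ∃ d : ℝ≥0∞, d * d = c ∧ d ≠ 0 ∧ d < 1 := by
    refine ⟨c ^ (1 / 2 : ℝ), ?_, by simp [hc0], ENNReal.rpow_lt_one hc (by norm_num)⟩
    rw [← ENNReal.rpow_add _ _ hc0 hc.ne_top, add_halves, ENNReal.rpow_one]
  obtain ⟨K₁, hK₁, hsum⟩ := exists_tsum_rpow_le_iSup hp hd0 hd
  obtain ⟨K₂, hK₂, hsup⟩ := exists_lorentzNorm_iSup_le_of_le_geometric r hq0 hd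
  refine ⟨K₁ * K₂, ENNReal.mul_ne_top hK₁ hK₂, fun x A hx => ?_⟩
  have hdecay (j : ℕ) : lorentzNorm r q (fun n => d⁻¹ ^ j * x j n) ≤ d ^ j * A :=
    calc lorentzNorm r q (fun n => d⁻¹ ^ j * x j n)
        = d⁻¹ ^ j * lorentzNorm r q (x j) := lorentzNorm_const_mul hq0 _ _
      _ ≤ d⁻¹ ^ j * (c ^ j * A) := by gcongr; exact hx j
      _ = d ^ j * A := by
        rw [← mul_assoc, ← mul_pow, ← hdd, ← mul_assoc, ENNReal.inv_mul_cancel hd0 hd.ne_top,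
          one_mul]
  calc lorentzNorm r q (fun n => (∑' j, x j n ^ p) ^ (1 / p))
      ≤ lorentzNorm r q (fun n => K₁ * ⨆ j, d⁻¹ ^ j * x j n) :=
        lorentzNorm_mono fun n => hsum fun j => x j n
    _ = K₁ * lorentzNorm r q (fun n => ⨆ j, d⁻¹ ^ j * x j n) := lorentzNorm_const_mul hq0 _ _
    _ ≤ K₁ * (K₂ * A) := by gcongr; exact hsup _ A hdecay
    _ = K₁ * K₂ * A := (mul_assoc _ _ _).symm

end LorentzNorm

section Dilate

variable {x : ℕ → ℝ≥0∞}

lemma lorentzNorm_top_dilate_le (r : ℝ) (x : ℕ → ℝ≥0∞) {L : ℕ} (hL : 0 < L) :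
    (L : ℝ≥0∞) ^ (1 / r) * lorentzNorm r ∞ (dilate L x) ≤ lorentzNorm r ∞ x := by
  simp only [lorentzNorm_top, ENNReal.mul_iSup]
  refine iSup_le fun n => ?_
  have hindex : L * (n + 1) - 1 + 1 = L * (n + 1) := Nat.sub_add_cancel (Nat.mul_pos hL n.succ_pos)
  calc (L : ℝ≥0∞) ^ (1 / r) * (((n : ℝ≥0∞) + 1) ^ (1 / r) * dilate L x n)
      = (((L * (n + 1) - 1 : ℕ) : ℝ≥0∞) + 1) ^ (1 / r) * x (L * (n + 1) - 1) := by
        rw [← mul_assoc, ← Nat.cast_add_one n, ← Nat.cast_add_one, hindex, Nat.cast_mul,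
          ENNReal.mul_rpow_of_ne_top (by simp) (by simp), dilate]
    _ ≤ ⨆ m : ℕ, ((m : ℝ≥0∞) + 1) ^ (1 / r) * x m :=
        le_iSup (fun m : ℕ => ((m : ℝ≥0∞) + 1) ^ (1 / r) * x m) _

lemma tsum_eq_tsum_sum_block (f : ℕ → ℝ≥0∞) {L : ℕ} (hL : 0 < L) :
    ∑' m, f m = ∑' n, ∑ i : Fin L, f (n * L + i) := by
  have : NeZero L := ⟨hL.ne'⟩
  rw [← (Nat.divModEquiv L).symm.tsum_eq f, ENNReal.tsum_prod']
  simp only [tsum_fintype, Nat.divModEquiv_symm_apply]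

-- The weight `(m + 1) ^ s` is comparable to `(L * (n + 1)) ^ s` only on the upper half of the
-- `n`-th block; of the two indices `i` and `i.rev` one always lies in the upper half.
lemma mul_rpow_mul_dilate_le_sum_block (s : ℝ) (hx : Antitone x) (L n : ℕ) :
    L * (((L * (n + 1) : ℕ) : ℝ≥0∞) ^ s * dilate L x n) ≤
      2 * max 1 (2 ^ s) *
        ∑ i : Fin L, (((n * L + i : ℕ) : ℝ≥0∞) + 1) ^ s * x (n * L + i) := by
  set f : Fin L → ℝ≥0∞ := fun i => (((n * L + i : ℕ) : ℝ≥0∞) + 1) ^ s * x (n * L + i) with hf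
  set K : ℝ≥0∞ := max 1 (2 ^ s)
  have hblock : L * (n + 1) = n * L + L := by ring
  have hupper (i : Fin L) (hi : L ≤ 2 * (i + 1 : ℕ)) :
      ((L * (n + 1) : ℕ) : ℝ≥0∞) ^ s * dilate L x n ≤ K * f i := by
    rw [hf, ← mul_assoc]
    gcongr
    · apply rpow_le_max_one_rpow_mul_rpow
      · exact_mod_cast (by omega : n * L + i + 1 ≤ L * (n + 1))
      · exact_mod_cast (by omega : L * (n + 1) ≤ 2 * (n * L + i + 1))
    · exact hx (by omega)
  have hpair (i : Fin L) :
      ((L * (n + 1) : ℕ) : ℝ≥0∞) ^ s * dilate L x n ≤ K * (f i + f i.rev) := by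
    have hrev : (i.rev : ℕ) = L - (i + 1) := Fin.val_rev i
    rcases le_total L (2 * (i + 1 : ℕ)) with hi | hi
    · exact (hupper i hi).trans (by gcongr; exact le_self_add)
    · exact (hupper i.rev (by omega)).trans (by gcongr; exact le_add_self)
  calc L * (((L * (n + 1) : ℕ) : ℝ≥0∞) ^ s * dilate L x n)
      = ∑ _i : Fin L, ((L * (n + 1) : ℕ) : ℝ≥0∞) ^ s * dilate L x n := by
        rw [Finset.sum_const, Finset.card_fin, nsmul_eq_mul]
    _ ≤ ∑ i, K * (f i + f i.rev) := Finset.sum_le_sum fun i _ => hpair i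
    _ = 2 * K * ∑ i, f i := by
        have hsum_rev : ∑ i : Fin L, f i.rev = ∑ i, f i := Equiv.sum_comp Fin.revPerm f
        rw [← Finset.mul_sum, Finset.sum_add_distrib, hsum_rev]
        ring

lemma rpow_mul_tsum_dilate_le (s : ℝ) (hx : Antitone x) {L : ℕ} (hL : 0 < L) :
    (L : ℝ≥0∞) ^ (s + 1) * ∑' n : ℕ, ((n : ℝ≥0∞) + 1) ^ s * dilate L x n ≤
      2 * max 1 (2 ^ s) * ∑' n : ℕ, ((n : ℝ≥0∞) + 1) ^ s * x n := by
  rw [tsum_eq_tsum_sum_block (fun n => ((n : ℝ≥0∞) + 1) ^ s * x n) hL, ← ENNReal.tsum_mul_left,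
    ← ENNReal.tsum_mul_left]
  refine ENNReal.tsum_le_tsum fun n => ?_
  refine Eq.trans_le ?_ (mul_rpow_mul_dilate_le_sum_block s hx L n)
  rw [ENNReal.rpow_add _ _ (by exact_mod_cast hL.ne') (by simp), ENNReal.rpow_one, Nat.cast_mul,
    ENNReal.mul_rpow_of_ne_top (by simp) (by simp)]
  push_cast
  ring

lemma exists_lorentzNorm_dilate_le (r : ℝ) {q : ℝ≥0∞} (hq0 : q ≠ 0) :
    ∃ K ≠ ∞, ∀ x : ℕ → ℝ≥0∞, Antitone x → ∀ L : ℕ, 0 < L →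
      (L : ℝ≥0∞) ^ (1 / r) * lorentzNorm r q (dilate L x) ≤ K * lorentzNorm r q x := by
  rcases eq_or_ne q ∞ with rfl | hq
  · refine ⟨1, ENNReal.one_ne_top, fun x _ L hL => ?_⟩
    simpa only [one_mul] using lorentzNorm_top_dilate_le r x hL
  · have hp : 0 < q.toReal := ENNReal.toReal_pos hq0 hq
    set p := q.toReal
    have hK : 2 * max 1 ((2 : ℝ≥0∞) ^ (p / r - 1)) ≠ ∞ := by
      simp [ENNReal.mul_eq_top, ENNReal.rpow_eq_top_iff]
    refine ⟨(2 * max 1 (2 ^ (p / r - 1))) ^ p⁻¹, ENNReal.rpow_ne_top_of_nonneg (by positivity) hK,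
      fun x hx L hL => (ENNReal.rpow_le_rpow_iff hp).1 ?_⟩
    have hxp : Antitone fun n => x n ^ p := fun m n hmn => ENNReal.rpow_le_rpow (hx hmn) hp.le
    rw [ENNReal.mul_rpow_of_nonneg _ _ hp.le, ENNReal.mul_rpow_of_nonneg _ _ hp.le,
      ENNReal.rpow_inv_rpow hp.ne', ← ENNReal.rpow_mul, lorentzNorm_rpow_toReal r hq0 hq,
      lorentzNorm_rpow_toReal r hq0 hq]
    rw [show 1 / r * p = p / r - 1 + 1 by ring]
    exact rpow_mul_tsum_dilate_le (p / r - 1) hxp hL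

lemma exists_lorentzNorm_rpow_mul_dilate_two_pow_le (r a : ℝ) {q : ℝ≥0∞} (hq0 : q ≠ 0) :
    ∃ K ≠ ∞, ∀ x : ℕ → ℝ≥0∞, Antitone x → ∀ j : ℕ,
      lorentzNorm r q (fun n => (2 ^ a) ^ j * dilate (2 ^ j) x n) ≤
        (2 ^ (a - 1 / r)) ^ j * (K * lorentzNorm r q x) := by
  obtain ⟨K, hK, hdilate⟩ := exists_lorentzNorm_dilate_le r hq0
  refine ⟨K, hK, fun x hx j => ?_⟩
  have hfactor : ((2 : ℝ≥0∞) ^ a) ^ j = (2 ^ (a - 1 / r)) ^ j * ((2 ^ j : ℕ) : ℝ≥0∞) ^ (1 / r) := by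
    rw [Nat.cast_pow, Nat.cast_ofNat, ← ENNReal.rpow_natCast_mul, mul_comm (j : ℝ),
      ENNReal.rpow_mul_natCast, ← mul_pow,
      ← ENNReal.rpow_add _ _ two_ne_zero ENNReal.ofNat_ne_top, sub_add_cancel]
  rw [lorentzNorm_const_mul hq0, hfactor, mul_assoc]
  exact mul_le_mul_right (hdilate x hx _ (Nat.two_pow_pos j)) _

lemma tsum_tail_le_tsum_dilate_two_pow (hx : Antitone x) (n : ℕ) :
    ∑' k, x (n + k) ≤ ∑' j : ℕ, 2 ^ j * ((n : ℝ≥0∞) + 1) * dilate (2 ^ j) x n := by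
  refine ENNReal.tsum_le_of_sum_range_le fun N => ?_
  have hrange : N ≤ 2 ^ N * (n + 1) - 2 ^ 0 * (n + 1) := by
    rw [← Nat.sub_mul]
    exact (Nat.le_sub_of_add_le N.lt_two_pow_self).trans (Nat.le_mul_of_pos_right _ n.succ_pos)
  have hshift (k : ℕ) : x (n + k) = x (2 ^ 0 * (n + 1) + k - 1) := by congr 1; omega
  have hlength (j : ℕ) : 2 ^ (j + 1) * (n + 1) - 2 ^ j * (n + 1) = 2 ^ j * (n + 1) := by
    rw [pow_succ, mul_right_comm, mul_two, Nat.add_sub_cancel]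
  have hmono : Monotone fun j => 2 ^ j * (n + 1) := fun i j hij => by
    dsimp only
    gcongr
    norm_num
  calc ∑ k ∈ Finset.range N, x (n + k)
      ≤ ∑ k ∈ Finset.range (2 ^ N * (n + 1) - 2 ^ 0 * (n + 1)), x (n + k) :=
        Finset.sum_le_sum_of_subset (Finset.range_mono hrange)
    _ = ∑ k ∈ Finset.Ico (2 ^ 0 * (n + 1)) (2 ^ N * (n + 1)), x (k - 1) := by
        simp only [Finset.sum_Ico_eq_sum_range, hshift]
    _ ≤ ∑ j ∈ Finset.range N, (2 ^ (j + 1) * (n + 1) - 2 ^ j * (n + 1)) •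
          x (2 ^ j * (n + 1) - 1) :=
        Finset.le_sum_schlomilch' (f := fun k => x (k - 1))
          (fun _ _ _ hkl => hx (Nat.sub_le_sub_right hkl 1)) (fun _ => by positivity) hmono N
    _ = ∑ j ∈ Finset.range N, 2 ^ j * ((n : ℝ≥0∞) + 1) * dilate (2 ^ j) x n :=
        Finset.sum_congr rfl fun j _ => by rw [hlength, nsmul_eq_mul, dilate]; push_cast; rfl
    _ ≤ ∑' j : ℕ, 2 ^ j * ((n : ℝ≥0∞) + 1) * dilate (2 ^ j) x n := ENNReal.sum_le_tsum _

lemma tail_div_rpow_le_tsum_dilate_two_pow {p : ℝ} (hp : 0 < p) (hx : Antitone x) (n : ℕ) :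
    (∑' k, x (n + k) ^ p) ^ (1 / p) / ((n : ℝ≥0∞) + 1) ^ (1 / p) ≤
      (∑' j : ℕ, ((2 ^ (1 / p)) ^ j * dilate (2 ^ j) x n) ^ p) ^ (1 / p) := by
  rw [← ENNReal.div_rpow_of_nonneg _ _ (by positivity)]
  gcongr
  refine ENNReal.div_le_of_le_mul ?_
  have hxp : Antitone fun n => x n ^ p := fun m n hmn => ENNReal.rpow_le_rpow (hx hmn) hp.le
  refine (tsum_tail_le_tsum_dilate_two_pow hxp n).trans_eq ?_
  rw [← ENNReal.tsum_mul_right]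
  refine tsum_congr fun j => ?_
  have hpow : (((2 : ℝ≥0∞) ^ (1 / p)) ^ j) ^ p = 2 ^ j := by
    rw [← ENNReal.rpow_mul_natCast, ← ENNReal.rpow_mul, ← ENNReal.rpow_natCast]
    congr 1
    field_simp
  rw [ENNReal.mul_rpow_of_nonneg _ _ hp.le, hpow, mul_right_comm]
  rfl

end Dilate

theorem hardy_tail_special_general {p r : ℝ} (hr : 0 < r) (hrp : r < p) {q : ℝ≥0∞} (hq : 0 < q) :
    ∃ C : ℝ, 0 < C ∧ ∀ b : ℕ → ℝ≥0∞, Antitone b →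
      lorentzNorm r q (fun n =>
          (∑' k : ℕ, b (n + k) ^ p) ^ (1 / p) / ENNReal.ofReal (((n : ℝ) + 1) ^ (1 / p))) ≤
        ENNReal.ofReal C * lorentzNorm r q b := by
  have hp : 0 < p := hr.trans hrp
  have hc0 : (2 : ℝ≥0∞) ^ (1 / p - 1 / r) ≠ 0 := by simp [ENNReal.rpow_eq_zero_iff]
  have hc : (2 : ℝ≥0∞) ^ (1 / p - 1 / r) < 1 := ENNReal.rpow_lt_one_of_one_lt_of_neg
    ENNReal.one_lt_two (sub_neg.2 (one_div_lt_one_div_of_lt hr hrp))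
  obtain ⟨K₁, hK₁, hdilate⟩ := exists_lorentzNorm_rpow_mul_dilate_two_pow_le r (1 / p) hq.ne'
  obtain ⟨K₂, hK₂, hsum⟩ := exists_lorentzNorm_tsum_rpow_le_of_le_geometric r hq.ne' hp hc0 hc
  obtain ⟨C, -, hC, -⟩ := ENNReal.lt_iff_exists_real_btwn.1
    (ENNReal.mul_lt_top hK₂.lt_top hK₁.lt_top)
  refine ⟨C, ENNReal.ofReal_pos.1 (bot_le.trans_lt hC), fun b hb => ?_⟩
  calc _ ≤ lorentzNorm r q (fun n =>
          (∑' j : ℕ, ((2 ^ (1 / p)) ^ j * dilate (2 ^ j) b n) ^ p) ^ (1 / p)) :=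
        lorentzNorm_mono fun n => by
          rw [ofReal_natCast_add_one_rpow]
          exact tail_div_rpow_le_tsum_dilate_two_pow hp hb n
    _ ≤ K₂ * (K₁ * lorentzNorm r q b) := hsum _ _ (hdilate b hb)
    _ ≤ ENNReal.ofReal C * lorentzNorm r q b := by rw [← mul_assoc]; gcongr

/-- Special case of the discrete Hardy inequality: for a nonnegative decreasing `(b_n)_{n≥1}`
(here `b n` stands for `b_{n+1}`) and `a_n = (Σ_{k=n+1}^∞ b_k²)^{1/2}`, the sequence
`(a_n/(n+1)^{1/2})_{n≥0}` satisfies `‖(a_n/(n+1)^{1/2})‖_{ℓ_{r,q}} ≲ ‖(b_n)‖_{ℓ_{r,q}}`. -/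
theorem hardy_tail_special (r : ℝ) (hr0 : 0 < r) (hr2 : r < 2) (q : ℝ≥0∞) (hq : 0 < q) :
    ∃ C : ℝ, 0 < C ∧ ∀ b : ℕ → ℝ, (∀ n, 0 ≤ b n) → Antitone b →
      lorentzNorm r q (fun n =>
          (∑' k : ℕ, ENNReal.ofReal (b (n + k) ^ 2)) ^ (1 / 2 : ℝ) /
            ENNReal.ofReal (((n : ℝ) + 1) ^ (1 / 2 : ℝ))) ≤
        ENNReal.ofReal C * lorentzNorm r q (fun n => ENNReal.ofReal (b n)) := by
  obtain ⟨C, hC, hnorm⟩ := hardy_tail_special_general hr0 hr2 hq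
  refine ⟨C, hC, fun b hb0 hb => ?_⟩
  simpa [ENNReal.ofReal_pow (hb0 _), Function.comp_def] using
    hnorm _ (ENNReal.ofReal_mono.comp_antitone hb)
end
end

section
/- Matrix version of rank-one reduction: for 0 < p ≤ 1 and a matrix M ∈ M_n(ℂ), the Schur multiplier norm ‖M‖_{M_p} := sup{‖M∘A‖_p : ‖A‖_p ≤ 1} (where ∘ is entrywise product and ‖·‖_p the Schatten p-quasinorm) equals the supremum of ‖M∘(ξη*)‖_p over unit vectors ξ, η ∈ ℂⁿ. -/
open scoped ENNReal Matrix

noncomputable section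

/-- `j`-th singular value of a complex `n × n` matrix: distance in the `ℓ²`-operator norm
to matrices of rank at most `j`. -/
def muM {n : ℕ} (A : Matrix (Fin n) (Fin n) ℂ) (j : ℕ) : ℝ :=
  sInf {c : ℝ | ∃ B : Matrix (Fin n) (Fin n) ℂ, B.rank ≤ j ∧
    c = ‖Matrix.toEuclideanCLM (𝕜 := ℂ) (A - B)‖}

/-- Schatten `p`-quasinorm of a matrix. -/
def schattenM {n : ℕ} (p : ℝ) (A : Matrix (Fin n) (Fin n) ℂ) : ℝ :=
  (∑ j ∈ Finset.range n, muM A j ^ p) ^ (1 / p)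

/-!
By the singular value decomposition, an operator `T` of quasinorm at most one is a combination of
unit rank-one operators with coefficients `σ_k`, `∑ σ_k ^ p ≤ 1`. Applying any linear map and the
`p`-triangle inequality `‖∑ A_i‖_p ^ p ≤ ∑ ‖A_i‖_p ^ p` to this decomposition bounds the image of
`T` by the supremum over unit rank-one operators.

The `p`-triangle inequality reduces in the same way to sums of rank-one operators `x_i y_i*`. There
it follows from the truncated trace inequality
`∑ min (σ_j, a) ≤ ∑ min (‖x_i‖ ‖y_i‖, a)` for all `a ≥ 0`, because `t ^ p` is a positive mixture of
the truncations `min (t, a)`.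
-/

section ConcavePowers

open Real Set MeasureTheory

lemma integrableOn_and_integral_min_mul_rpow {p t : ℝ} (hp0 : 0 < p) (hp1 : p < 1) (ht : 0 ≤ t) :
    IntegrableOn (fun a => min t a * a ^ (p - 2)) (Ioi 0) ∧
      ∫ a in Ioi 0, min t a * a ^ (p - 2) = t ^ p / (p * (1 - p)) := by
  rcases ht.eq_or_lt with rfl | ht
  · have vanish : EqOn (fun a : ℝ => min 0 a * a ^ (p - 2)) 0 (Ioi 0) := fun a ha => by
      simp [min_eq_left (mem_Ioi.mp ha).le]
    rw [integrableOn_congr_fun vanish measurableSet_Ioi,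
      setIntegral_congr_fun measurableSet_Ioi vanish]
    exact ⟨integrableOn_zero, by simp [zero_rpow hp0.ne']⟩
  have left : EqOn (fun a => a ^ (p - 1)) (fun a => min t a * a ^ (p - 2)) (Ioc 0 t) :=
    fun a ha => by
      simp only [min_eq_right ha.2]
      rw [← rpow_one_add' ha.1.le (by linarith)]
      ring_nf
  have right : EqOn (fun a => t * a ^ (p - 2)) (fun a => min t a * a ^ (p - 2)) (Ioi t) :=
    fun a ha => by simp only [min_eq_left (mem_Ioi.mp ha).le]
  have left_integrable : IntegrableOn (fun a => a ^ (p - 1)) (Ioc 0 t) :=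
    (intervalIntegrable_iff_integrableOn_Ioc_of_le ht.le).mp
      (intervalIntegral.intervalIntegrable_rpow' (by linarith))
  have right_integrable : IntegrableOn (fun a => t * a ^ (p - 2)) (Ioi t) :=
    (integrableOn_Ioi_rpow_of_lt (by linarith) ht).const_mul t
  have left_integral : ∫ a in Ioc 0 t, a ^ (p - 1) = t ^ p / p := by
    rw [← intervalIntegral.integral_of_le ht.le, integral_rpow (Or.inl (by linarith))]
    simp [zero_rpow hp0.ne']
  have right_integral : ∫ a in Ioi t, t * a ^ (p - 2) = t ^ p / (1 - p) := by
    rw [integral_const_mul, integral_Ioi_rpow_of_lt (by linarith) ht,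
      show p - 2 + 1 = p - 1 by ring, rpow_sub_one ht.ne', ← neg_sub 1 p]
    field_simp
  rw [integrableOn_congr_fun left measurableSet_Ioc] at left_integrable
  rw [integrableOn_congr_fun right measurableSet_Ioi] at right_integrable
  rw [setIntegral_congr_fun measurableSet_Ioc left] at left_integral
  rw [setIntegral_congr_fun measurableSet_Ioi right] at right_integral
  rw [← Ioc_union_Ioi_eq_Ioi ht.le]
  refine ⟨left_integrable.union right_integrable, ?_⟩
  rw [setIntegral_union (Ioc_disjoint_Ioi le_rfl) measurableSet_Ioi left_integrable
    right_integrable, left_integral, right_integral]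
  have : 1 - p ≠ 0 := by linarith
  field_simp
  ring

theorem sum_rpow_le_sum_rpow_of_sum_min_le {ι κ : Type*} {S : Finset ι} {U : Finset κ}
    {c : ι → ℝ} {d : κ → ℝ} (hc : ∀ i ∈ S, 0 ≤ c i) (hd : ∀ k ∈ U, 0 ≤ d k) {p : ℝ}
    (hp0 : 0 < p) (hp1 : p ≤ 1)
    (h : ∀ a, 0 ≤ a → ∑ i ∈ S, min (c i) a ≤ ∑ k ∈ U, min (d k) a) :
    ∑ i ∈ S, c i ^ p ≤ ∑ k ∈ U, d k ^ p := by
  rcases hp1.eq_or_lt with rfl | hp1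
  · simp only [rpow_one]
    calc ∑ i ∈ S, c i = ∑ i ∈ S, min (c i) (∑ i ∈ S, c i) :=
          Finset.sum_congr rfl fun i hi => (min_eq_left (Finset.single_le_sum hc hi)).symm
      _ ≤ ∑ k ∈ U, min (d k) (∑ i ∈ S, c i) := h _ (Finset.sum_nonneg hc)
      _ ≤ ∑ k ∈ U, d k := Finset.sum_le_sum fun _ _ => min_le_left _ _
  have integrable_c := fun i hi =>
    (integrableOn_and_integral_min_mul_rpow hp0 hp1 (hc i hi)).1
  have integrable_d := fun k hk =>
    (integrableOn_and_integral_min_mul_rpow hp0 hp1 (hd k hk)).1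
  have integral_le : ∫ a in Ioi (0 : ℝ), ∑ i ∈ S, min (c i) a * a ^ (p - 2)
      ≤ ∫ a in Ioi (0 : ℝ), ∑ k ∈ U, min (d k) a * a ^ (p - 2) := by
    refine setIntegral_mono_on (integrable_finsetSum S integrable_c)
      (integrable_finsetSum U integrable_d) measurableSet_Ioi fun a (ha : 0 < a) => ?_
    rw [← Finset.sum_mul, ← Finset.sum_mul]
    gcongr
    exact h a ha.le
  rw [integral_finsetSum S integrable_c, integral_finsetSum U integrable_d,
    Finset.sum_congr rfl fun i hi =>
      (integrableOn_and_integral_min_mul_rpow hp0 hp1 (hc i hi)).2,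
    Finset.sum_congr rfl fun k hk =>
      (integrableOn_and_integral_min_mul_rpow hp0 hp1 (hd k hk)).2,
    ← Finset.sum_div, ← Finset.sum_div] at integral_le
  exact (div_le_div_iff_of_pos_right (mul_pos hp0 (sub_pos.mpr hp1))).mp integral_le

end ConcavePowers

section SingularValues

open Module InnerProductSpace

variable {𝕜 E F : Type*} [RCLike 𝕜]
  [NormedAddCommGroup E] [InnerProductSpace 𝕜 E]
  [NormedAddCommGroup F] [InnerProductSpace 𝕜 F]

lemma sum_norm_inner_rankOne_le {κ : Type*} [Fintype κ] {f : κ → F} {e : κ → E}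
    (hf : Orthonormal 𝕜 f) (he : Orthonormal 𝕜 e) (x : F) (y : E) :
    ∑ k, ‖⟪f k, rankOne 𝕜 x y (e k)⟫_𝕜‖ ≤ ‖x‖ * ‖y‖ :=
  calc ∑ k, ‖⟪f k, rankOne 𝕜 x y (e k)⟫_𝕜‖
      = ∑ k, ‖⟪f k, x⟫_𝕜‖ * ‖⟪e k, y⟫_𝕜‖ := by
        simp [inner_smul_right, norm_inner_symm y, mul_comm]
    _ ≤ √(∑ k, ‖⟪f k, x⟫_𝕜‖ ^ 2) * √(∑ k, ‖⟪e k, y⟫_𝕜‖ ^ 2) := Real.sum_mul_le_sqrt_mul_sqrt _ _ _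
    _ ≤ ‖x‖ * ‖y‖ := by
        gcongr
        · exact Real.sqrt_le_iff.mpr ⟨norm_nonneg x, hf.sum_inner_products_le x⟩
        · exact Real.sqrt_le_iff.mpr ⟨norm_nonneg y, he.sum_inner_products_le y⟩

lemma finrank_range_sum_rankOne_le {ι : Type*} (S : Finset ι) (x : ι → F) (y : ι → E) :
    finrank 𝕜 (∑ i ∈ S, rankOne 𝕜 (x i) (y i)).toLinearMap.range ≤ S.card := by
  classical
  have range_le : (∑ i ∈ S, rankOne 𝕜 (x i) (y i)).toLinearMap.range
      ≤ .span 𝕜 (S.image x : Set F) := by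
    rintro _ ⟨z, rfl⟩
    rw [ContinuousLinearMap.coe_coe, sum_apply]
    exact sum_mem fun i hi =>
      Submodule.smul_mem _ _ (Submodule.subset_span (Finset.mem_image_of_mem x hi))
  exact (Submodule.finrank_mono range_le).trans
    ((finrank_span_finset_le_card _).trans Finset.card_image_le)

variable [FiniteDimensional 𝕜 E] [FiniteDimensional 𝕜 F]

/-- Right singular vectors of `T`: an orthonormal eigenbasis of `T† T`, numbered so that the `i`-th
vector belongs to the eigenvalue `T.singularValues i ^ 2`. -/
def rightSingularBasis (T : E →L[𝕜] F) : OrthonormalBasis (Fin (finrank 𝕜 E)) 𝕜 E :=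
  T.toLinearMap.isSymmetric_adjoint_comp_self.eigenvectorBasis rfl

lemma inner_apply_rightSingularBasis (T : E →L[𝕜] F) (i : Fin (finrank 𝕜 E)) (x : E) :
    ⟪T (rightSingularBasis T i), T x⟫_𝕜
      = (T.toLinearMap.singularValues i : 𝕜) ^ 2 * ⟪rightSingularBasis T i, x⟫_𝕜 := by
  have eigen : T.toLinearMap.adjoint (T (rightSingularBasis T i))
      = ((T.toLinearMap.singularValues i ^ 2 : ℝ) : 𝕜) • rightSingularBasis T i := by
    rw [T.toLinearMap.sq_singularValues_fin rfl i]
    exact T.toLinearMap.isSymmetric_adjoint_comp_self.apply_eigenvectorBasis rfl i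
  calc ⟪T (rightSingularBasis T i), T x⟫_𝕜
      = ⟪T.toLinearMap.adjoint (T (rightSingularBasis T i)), x⟫_𝕜 :=
        (LinearMap.adjoint_inner_left _ _ _).symm
    _ = (T.toLinearMap.singularValues i : 𝕜) ^ 2 * ⟪rightSingularBasis T i, x⟫_𝕜 := by
        rw [eigen, inner_smul_left, RCLike.conj_ofReal, RCLike.ofReal_pow]

lemma norm_apply_sq_eq_sum_singularValues (T : E →L[𝕜] F) (x : E) :
    ‖T x‖ ^ 2
      = ∑ i : Fin (finrank 𝕜 E),
          T.toLinearMap.singularValues i ^ 2 * ‖⟪rightSingularBasis T i, x⟫_𝕜‖ ^ 2 := by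
  set b := rightSingularBasis T
  have expansion : ⟪T x, T x⟫_𝕜
      = ∑ i : Fin (finrank 𝕜 E),
          (T.toLinearMap.singularValues i : 𝕜) ^ 2 * (‖⟪b i, x⟫_𝕜‖ : 𝕜) ^ 2 := by
    conv_lhs => enter [2]; rw [← b.sum_repr' x]
    simp only [map_sum, map_smul, sum_inner, inner_smul_left]
    refine Finset.sum_congr rfl fun i _ => ?_
    rw [inner_apply_rightSingularBasis, mul_left_comm, RCLike.conj_mul]
  rw [inner_self_eq_norm_sq_to_K] at expansion
  exact_mod_cast expansion

lemma norm_apply_rightSingularBasis (T : E →L[𝕜] F) (i : Fin (finrank 𝕜 E)) :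
    ‖T (rightSingularBasis T i)‖ = T.toLinearMap.singularValues i := by
  rw [← sq_eq_sq₀ (norm_nonneg _) (T.toLinearMap.singularValues_nonneg i),
    norm_apply_sq_eq_sum_singularValues]
  simp [(rightSingularBasis T).inner_eq_ite, apply_ite norm]

lemma norm_apply_le_of_inner_eq_zero_of_lt (T : E →L[𝕜] F) {k : ℕ} {x : E}
    (hx : ∀ i : Fin (finrank 𝕜 E), (i : ℕ) < k → ⟪rightSingularBasis T i, x⟫_𝕜 = 0) :
    ‖T x‖ ≤ T.toLinearMap.singularValues k * ‖x‖ := by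
  refine le_of_sq_le_sq ?_ (mul_nonneg (T.toLinearMap.singularValues_nonneg k) (norm_nonneg x))
  rw [norm_apply_sq_eq_sum_singularValues, mul_pow,
    ← (rightSingularBasis T).sum_sq_norm_inner_right x, Finset.mul_sum]
  refine Finset.sum_le_sum fun i _ => ?_
  rcases lt_or_ge (i : ℕ) k with hi | hi
  · simp [hx i hi]
  · gcongr
    · exact T.toLinearMap.singularValues_nonneg i
    · exact T.toLinearMap.singularValues_antitone hi

lemma le_norm_apply_of_inner_eq_zero_of_gt (T : E →L[𝕜] F) {k : ℕ} {x : E}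
    (hx : ∀ i : Fin (finrank 𝕜 E), k < i → ⟪rightSingularBasis T i, x⟫_𝕜 = 0) :
    T.toLinearMap.singularValues k * ‖x‖ ≤ ‖T x‖ := by
  refine le_of_sq_le_sq ?_ (norm_nonneg _)
  rw [norm_apply_sq_eq_sum_singularValues, mul_pow,
    ← (rightSingularBasis T).sum_sq_norm_inner_right x, Finset.mul_sum]
  refine Finset.sum_le_sum fun i _ => ?_
  rcases lt_or_ge k i with hi | hi
  · simp [hx i hi]
  · gcongr
    · exact T.toLinearMap.singularValues_nonneg k
    · exact T.toLinearMap.singularValues_antitone hi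

lemma singularValues_le_norm_sub (T S : E →L[𝕜] F) {k : ℕ}
    (hS : finrank 𝕜 S.toLinearMap.range ≤ k) :
    T.toLinearMap.singularValues k ≤ ‖T - S‖ := by
  rcases le_or_gt (finrank 𝕜 E) k with hk | hk
  · simp [T.toLinearMap.singularValues_of_finrank_le hk]
  -- Counting dimensions, `ker S` meets the span of the first `k + 1` right singular vectors.
  let constraints : E →ₗ[𝕜] S.toLinearMap.range × ({i : Fin (finrank 𝕜 E) // k < i} → 𝕜) :=
    S.toLinearMap.rangeRestrict.prod
      (LinearMap.pi fun i => (innerSL 𝕜 (rightSingularBasis T i)).toLinearMap)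
  have dim_lt : finrank 𝕜 (S.toLinearMap.range × ({i : Fin (finrank 𝕜 E) // k < i} → 𝕜))
      < finrank 𝕜 E := by
    have card_gt : Fintype.card {i : Fin (finrank 𝕜 E) // k < i} = finrank 𝕜 E - 1 - k := by
      rw [Fintype.card_subtype, ← Fin.card_Ioi ⟨k, hk⟩, ← Finset.filter_lt_eq_Ioi]
      rfl
    rw [finrank_prod, finrank_fintype_fun_eq_card, card_gt]
    omega
  obtain ⟨x, hx, hx0⟩ := (Submodule.ne_bot_iff _).mp (LinearMap.ker_ne_bot_of_finrank_lt
    (f := constraints) dim_lt)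
  obtain ⟨hSx, horth⟩ : S x = 0 ∧ ∀ i : Fin (finrank 𝕜 E), k < i →
      ⟪rightSingularBasis T i, x⟫_𝕜 = 0 := by
    simpa [constraints, funext_iff, Subtype.ext_iff] using hx
  refine le_of_mul_le_mul_right ?_ (norm_pos_iff.mpr hx0)
  calc T.toLinearMap.singularValues k * ‖x‖
      ≤ ‖T x‖ := le_norm_apply_of_inner_eq_zero_of_gt T horth
    _ = ‖(T - S) x‖ := by simp [hSx]
    _ ≤ ‖T - S‖ * ‖x‖ := (T - S).le_opNorm x

lemma singularValues_le_norm (T : E →L[𝕜] F) (k : ℕ) :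
    T.toLinearMap.singularValues k ≤ ‖T‖ := by
  simpa using singularValues_le_norm_sub T 0 (k := k)
    (by rw [ContinuousLinearMap.toLinearMap_zero, LinearMap.range_zero, finrank_bot]; omega)

lemma exists_finrank_range_le_norm_sub_le (T : E →L[𝕜] F) (k : ℕ) :
    ∃ S : E →L[𝕜] F, finrank 𝕜 S.toLinearMap.range ≤ k ∧
      ‖T - S‖ ≤ T.toLinearMap.singularValues k := by
  classical
  let leading : Finset (Fin (finrank 𝕜 E)) := {i | (i : ℕ) < k}
  let U : Submodule 𝕜 E := .span 𝕜 (leading.image (rightSingularBasis T) : Set E)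
  have hU : finrank 𝕜 U ≤ k :=
    calc finrank 𝕜 U ≤ (leading.image (rightSingularBasis T)).card :=
          finrank_span_finset_le_card _
      _ ≤ leading.card := Finset.card_image_le
      _ ≤ k := by simp [leading, Fin.card_filter_val_lt]
  refine ⟨T ∘L U.starProjection, ?_, ?_⟩
  · rw [ContinuousLinearMap.toLinearMap_comp, LinearMap.range_comp]
    refine (Submodule.finrank_map_le _ _).trans ?_
    rwa [Submodule.range_starProjection]
  · refine ContinuousLinearMap.opNorm_le_bound _ (T.toLinearMap.singularValues_nonneg k)
      fun x => ?_
    have orth : ∀ i : Fin (finrank 𝕜 E), (i : ℕ) < k →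
        ⟪rightSingularBasis T i, x - U.starProjection x⟫_𝕜 = 0 := fun i hi =>
      (U.mem_orthogonal _).mp (U.sub_starProjection_mem_orthogonal x) _
        (Submodule.subset_span (by simpa [leading] using ⟨i, hi, rfl⟩))
    calc ‖(T - T ∘L U.starProjection) x‖
        = ‖T (x - U.starProjection x)‖ := by simp
      _ ≤ T.toLinearMap.singularValues k * ‖x - U.starProjection x‖ :=
          norm_apply_le_of_inner_eq_zero_of_lt T orth
      _ ≤ T.toLinearMap.singularValues k * ‖x‖ := by
          rw [← U.starProjection_orthogonal_val]
          gcongr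
          · exact T.toLinearMap.singularValues_nonneg k
          · exact Uᗮ.norm_starProjection_apply_le x

theorem isLeast_norm_sub_singularValues (T : E →L[𝕜] F) (k : ℕ) :
    IsLeast {c : ℝ | ∃ S : E →L[𝕜] F, finrank 𝕜 S.toLinearMap.range ≤ k ∧ c = ‖T - S‖}
      (T.toLinearMap.singularValues k) := by
  obtain ⟨S, hS, hTS⟩ := exists_finrank_range_le_norm_sub_le T k
  refine ⟨⟨S, hS, (singularValues_le_norm_sub T S hS).antisymm hTS⟩, ?_⟩
  rintro _ ⟨S, hS, rfl⟩
  exact singularValues_le_norm_sub T S hS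

lemma singularValues_smul_le (c : 𝕜) (T : E →L[𝕜] F) (k : ℕ) :
    (c • T).toLinearMap.singularValues k ≤ ‖c‖ * T.toLinearMap.singularValues k := by
  obtain ⟨S, hS, hTS⟩ := exists_finrank_range_le_norm_sub_le T k
  have rank_smul : finrank 𝕜 (c • S).toLinearMap.range ≤ k :=
    (Submodule.finrank_mono (LinearMap.range_smul_le_range _ _)).trans hS
  calc (c • T).toLinearMap.singularValues k
      ≤ ‖c • T - c • S‖ := singularValues_le_norm_sub _ _ rank_smul
    _ = ‖c‖ * ‖T - S‖ := by rw [← smul_sub, norm_smul]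
    _ ≤ ‖c‖ * T.toLinearMap.singularValues k := by gcongr

lemma singularValues_smul (c : 𝕜) (T : E →L[𝕜] F) (k : ℕ) :
    (c • T).toLinearMap.singularValues k = ‖c‖ * T.toLinearMap.singularValues k := by
  rcases eq_or_ne c 0 with rfl | hc
  · simp
  refine (singularValues_smul_le c T k).antisymm ?_
  rw [← le_inv_mul_iff₀ (norm_pos_iff.mpr hc), ← norm_inv]
  simpa [hc] using singularValues_smul_le c⁻¹ (c • T) k

lemma singularValues_add_le_singularValues_sub (T S : E →L[𝕜] F) (j : ℕ) {k : ℕ}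
    (hS : finrank 𝕜 S.toLinearMap.range ≤ k) :
    T.toLinearMap.singularValues (j + k) ≤ (T - S).toLinearMap.singularValues j := by
  obtain ⟨R, hR, hTSR⟩ := exists_finrank_range_le_norm_sub_le (T - S) j
  have rank_add : finrank 𝕜 (R + S).toLinearMap.range ≤ j + k :=
    calc finrank 𝕜 (R + S).toLinearMap.range
        ≤ finrank 𝕜 ↥(R.toLinearMap.range ⊔ S.toLinearMap.range) :=
          Submodule.finrank_mono (LinearMap.range_add_le _ _)
      _ ≤ finrank 𝕜 R.toLinearMap.range + finrank 𝕜 S.toLinearMap.range :=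
          Submodule.finrank_add_le_finrank_add_finrank _ _
      _ ≤ j + k := add_le_add hR hS
  calc T.toLinearMap.singularValues (j + k)
      ≤ ‖T - (R + S)‖ := singularValues_le_norm_sub _ _ rank_add
    _ = ‖T - S - R‖ := by rw [add_comm, sub_sub]
    _ ≤ (T - S).toLinearMap.singularValues j := hTSR

theorem exists_orthonormal_eq_sum_singularValues_smul_rankOne (T : E →L[𝕜] F) :
    ∃ (u : Fin (finrank 𝕜 T.toLinearMap.range) → F) (v : Fin (finrank 𝕜 T.toLinearMap.range) → E),
      Orthonormal 𝕜 u ∧ Orthonormal 𝕜 v ∧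
        T = ∑ i : Fin (finrank 𝕜 T.toLinearMap.range),
          (T.toLinearMap.singularValues i : 𝕜) • rankOne 𝕜 (u i) (v i) := by
  set b := rightSingularBasis T
  set incl := Fin.castLE (LinearMap.finrank_range_le T.toLinearMap)
  have incl_injective : Function.Injective incl := Fin.castLE_injective _
  have singularValue_ne_zero (i : Fin (finrank 𝕜 T.toLinearMap.range)) :
      (T.toLinearMap.singularValues i : 𝕜) ≠ 0 :=
    RCLike.ofReal_ne_zero.mpr (T.toLinearMap.singularValues_pos_iff_lt_finrank_range.mpr i.2).ne'
  refine ⟨fun i => (T.toLinearMap.singularValues i : 𝕜)⁻¹ • T (b (incl i)), b ∘ incl, ?_,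
    b.orthonormal.comp _ incl_injective, ?_⟩
  · rw [orthonormal_iff_ite]
    intro i j
    rw [inner_smul_left, inner_smul_right, inner_apply_rightSingularBasis, b.inner_eq_ite]
    rcases eq_or_ne i j with rfl | hij
    · simp [incl, sq, singularValue_ne_zero i]
    · simp [incl_injective.ne hij, hij]
  · ext x
    have apply_eq_zero : ∀ i ∉ Set.range incl, ⟪b i, x⟫_𝕜 • T (b i) = 0 := by
      intro i hi
      have hr : finrank 𝕜 T.toLinearMap.range ≤ i := by
        by_contra! h
        exact hi ⟨⟨i, h⟩, rfl⟩
      rw [norm_eq_zero.mp ((norm_apply_rightSingularBasis T i).trans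
        (T.toLinearMap.singularValues_eq_zero_iff_le_finrank_range.mpr hr)), smul_zero]
    calc T x = ∑ i, ⟪b i, x⟫_𝕜 • T (b i) := by
          conv_lhs => rw [← b.sum_repr' x]
          simp only [map_sum, map_smul]
      _ = ∑ i, ⟪b (incl i), x⟫_𝕜 • T (b (incl i)) :=
          (Fintype.sum_of_injective incl incl_injective _ _ apply_eq_zero fun _ => rfl).symm
      _ = _ := by
          simp [smul_smul, singularValue_ne_zero]

lemma sum_range_finrank_singularValues (T : E →L[𝕜] F) {f : ℝ → ℝ} (hf : f 0 = 0) :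
    ∑ j ∈ Finset.range (finrank 𝕜 E), f (T.toLinearMap.singularValues j)
      = ∑ i : Fin (finrank 𝕜 T.toLinearMap.range), f (T.toLinearMap.singularValues i) := by
  rw [← Finset.sum_range fun j => f (T.toLinearMap.singularValues j)]
  refine (Finset.sum_subset (Finset.range_subset_range.mpr
    (LinearMap.finrank_range_le T.toLinearMap)) fun j _ hj => ?_).symm
  rw [T.toLinearMap.singularValues_eq_zero_iff_le_finrank_range.mpr (by simpa using hj), hf]

lemma sum_singularValues_sum_rankOne_le {ι : Type*} (S : Finset ι) (x : ι → F) (y : ι → E) :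
    ∑ j ∈ Finset.range (finrank 𝕜 E),
        (∑ i ∈ S, rankOne 𝕜 (x i) (y i)).toLinearMap.singularValues j
      ≤ ∑ i ∈ S, ‖x i‖ * ‖y i‖ := by
  set T := ∑ i ∈ S, rankOne 𝕜 (x i) (y i) with hT
  obtain ⟨f, e, hf, he, svd⟩ := exists_orthonormal_eq_sum_singularValues_smul_rankOne T
  have apply_e (k) : T (e k) = (T.toLinearMap.singularValues k : 𝕜) • f k := by
    conv_lhs => rw [svd]
    simp [orthonormal_iff_ite.mp he]
  have singularValue_eq (k : Fin (finrank 𝕜 T.toLinearMap.range)) :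
      T.toLinearMap.singularValues k = ‖⟪f k, T (e k)⟫_𝕜‖ := by
    simp [apply_e, inner_smul_right, hf.norm_eq_one k,
      abs_of_nonneg (T.toLinearMap.singularValues_nonneg k)]
  calc ∑ j ∈ Finset.range (finrank 𝕜 E), T.toLinearMap.singularValues j
      = ∑ k, ‖⟪f k, T (e k)⟫_𝕜‖ :=
        (sum_range_finrank_singularValues T (f := id) rfl).trans
          (Fintype.sum_congr _ _ singularValue_eq)
    _ ≤ ∑ k, ∑ i ∈ S, ‖⟪f k, rankOne 𝕜 (x i) (y i) (e k)⟫_𝕜‖ := by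
        refine Finset.sum_le_sum fun k _ => ?_
        rw [hT, sum_apply, inner_sum]
        exact norm_sum_le _ _
    _ = ∑ i ∈ S, ∑ k, ‖⟪f k, rankOne 𝕜 (x i) (y i) (e k)⟫_𝕜‖ := Finset.sum_comm
    _ ≤ ∑ i ∈ S, ‖x i‖ * ‖y i‖ :=
        Finset.sum_le_sum fun i _ => sum_norm_inner_rankOne_le hf he (x i) (y i)

-- The summands of norm above `a` form an operator of rank at most their number; deleting them
-- shifts the singular values by that number and costs at most `a` for each.
lemma sum_min_singularValues_sum_rankOne_le {ι : Type*} (S : Finset ι) (x : ι → F) (y : ι → E)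
    {a : ℝ} (ha : 0 ≤ a) :
    ∑ j ∈ Finset.range (finrank 𝕜 E),
        min ((∑ i ∈ S, rankOne 𝕜 (x i) (y i)).toLinearMap.singularValues j) a
      ≤ ∑ i ∈ S, min (‖x i‖ * ‖y i‖) a := by
  classical
  set T := ∑ i ∈ S, rankOne 𝕜 (x i) (y i) with hT
  set large := S.filter fun i => a < ‖x i‖ * ‖y i‖
  set small := S.filter fun i => ¬ a < ‖x i‖ * ‖y i‖
  set L := ∑ i ∈ large, rankOne 𝕜 (x i) (y i)
  have sub_large : T - L = ∑ i ∈ small, rankOne 𝕜 (x i) (y i) := by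
    rw [sub_eq_iff_eq_add', hT, Finset.sum_filter_add_sum_filter_not]
  have min_nonneg (j : ℕ) : 0 ≤ min (T.toLinearMap.singularValues j) a :=
    le_min (T.toLinearMap.singularValues_nonneg j) ha
  calc ∑ j ∈ Finset.range (finrank 𝕜 E), min (T.toLinearMap.singularValues j) a
      ≤ ∑ j ∈ Finset.range (large.card + finrank 𝕜 E), min (T.toLinearMap.singularValues j) a :=
        Finset.sum_le_sum_of_subset_of_nonneg (Finset.range_mono (Nat.le_add_left _ _))
          fun j _ _ => min_nonneg j
    _ ≤ ∑ _j ∈ Finset.range large.card, a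
          + ∑ j ∈ Finset.range (finrank 𝕜 E), (T - L).toLinearMap.singularValues j := by
        rw [Finset.sum_range_add]
        gcongr with j _ j _
        · exact min_le_right _ _
        · rw [add_comm]
          exact (min_le_left _ _).trans (singularValues_add_le_singularValues_sub T L j
            (finrank_range_sum_rankOne_le large x y))
    _ ≤ ∑ _i ∈ large, a + ∑ i ∈ small, ‖x i‖ * ‖y i‖ := by
        rw [Finset.sum_const, Finset.card_range, ← Finset.sum_const, sub_large]
        gcongr
        exact sum_singularValues_sum_rankOne_le small x y
    _ = ∑ i ∈ S, min (‖x i‖ * ‖y i‖) a := by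
        rw [← Finset.sum_filter_add_sum_filter_not S fun i => a < ‖x i‖ * ‖y i‖]
        congr 1
        · exact Finset.sum_congr rfl fun i hi =>
            (min_eq_right (Finset.mem_filter.mp hi).2.le).symm
        · exact Finset.sum_congr rfl fun i hi =>
            (min_eq_left (not_lt.mp (Finset.mem_filter.mp hi).2)).symm

end SingularValues

section SchattenQuasinorm

open Module InnerProductSpace

variable {𝕜 E F : Type*} [RCLike 𝕜]
  [NormedAddCommGroup E] [InnerProductSpace 𝕜 E] [FiniteDimensional 𝕜 E]
  [NormedAddCommGroup F] [InnerProductSpace 𝕜 F] [FiniteDimensional 𝕜 F]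

/-- The Schatten `p`-quasinorm of an operator, for an exponent `0 < p`. The singular values are
indexed by `ℕ` and vanish from the dimension of the domain on, so that the sum omits only zeros. -/
def schattenQuasinorm (p : ℝ) (T : E →L[𝕜] F) : ℝ :=
  (∑ j ∈ Finset.range (finrank 𝕜 E), T.toLinearMap.singularValues j ^ p) ^ (1 / p)

lemma sum_singularValues_rpow_nonneg (p : ℝ) (T : E →L[𝕜] F) :
    0 ≤ ∑ j ∈ Finset.range (finrank 𝕜 E), T.toLinearMap.singularValues j ^ p :=
  Finset.sum_nonneg fun j _ => Real.rpow_nonneg (T.toLinearMap.singularValues_nonneg j) p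

lemma schattenQuasinorm_nonneg (p : ℝ) (T : E →L[𝕜] F) : 0 ≤ schattenQuasinorm p T :=
  Real.rpow_nonneg (sum_singularValues_rpow_nonneg p T) _

lemma schattenQuasinorm_rpow {p : ℝ} (hp : p ≠ 0) (T : E →L[𝕜] F) :
    schattenQuasinorm p T ^ p
      = ∑ j ∈ Finset.range (finrank 𝕜 E), T.toLinearMap.singularValues j ^ p := by
  rw [schattenQuasinorm, one_div, Real.rpow_inv_rpow (sum_singularValues_rpow_nonneg p T) hp]

lemma schattenQuasinorm_le_finrank_rpow_mul_norm {p : ℝ} (hp : 0 < p) (T : E →L[𝕜] F) :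
    schattenQuasinorm p T ≤ (finrank 𝕜 E : ℝ) ^ (1 / p) * ‖T‖ := by
  calc schattenQuasinorm p T
      ≤ (∑ _j ∈ Finset.range (finrank 𝕜 E), ‖T‖ ^ p) ^ (1 / p) := by
        refine Real.rpow_le_rpow (sum_singularValues_rpow_nonneg p T)
          (Finset.sum_le_sum fun j _ => ?_) (by positivity)
        exact Real.rpow_le_rpow (T.toLinearMap.singularValues_nonneg j)
          (singularValues_le_norm T j) hp.le
    _ = (finrank 𝕜 E : ℝ) ^ (1 / p) * ‖T‖ := by
        rw [Finset.sum_const, Finset.card_range, nsmul_eq_mul,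
          Real.mul_rpow (by positivity) (by positivity), one_div,
          Real.rpow_rpow_inv (norm_nonneg T) hp.ne']

lemma schattenQuasinorm_smul {p : ℝ} (hp : p ≠ 0) (c : 𝕜) (T : E →L[𝕜] F) :
    schattenQuasinorm p (c • T) = ‖c‖ * schattenQuasinorm p T := by
  simp only [schattenQuasinorm, singularValues_smul,
    Real.mul_rpow (norm_nonneg c) (T.toLinearMap.singularValues_nonneg _), ← Finset.mul_sum]
  rw [Real.mul_rpow (by positivity) (sum_singularValues_rpow_nonneg p T), one_div,
    Real.rpow_rpow_inv (norm_nonneg c) hp]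

lemma schattenQuasinorm_sum_rankOne_rpow_le {p : ℝ} (hp0 : 0 < p) (hp1 : p ≤ 1) {ι : Type*}
    (S : Finset ι) (x : ι → F) (y : ι → E) :
    schattenQuasinorm p (∑ i ∈ S, rankOne 𝕜 (x i) (y i)) ^ p
      ≤ ∑ i ∈ S, (‖x i‖ * ‖y i‖) ^ p := by
  rw [schattenQuasinorm_rpow hp0.ne']
  exact sum_rpow_le_sum_rpow_of_sum_min_le (fun j _ => LinearMap.singularValues_nonneg _ j)
    (fun i _ => by positivity) hp0 hp1 fun _ => sum_min_singularValues_sum_rankOne_le S x y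

lemma schattenQuasinorm_rankOne_le {p : ℝ} (hp0 : 0 < p) (hp1 : p ≤ 1) (x : F) (y : E) :
    schattenQuasinorm p (rankOne 𝕜 x y) ≤ ‖x‖ * ‖y‖ := by
  rw [← Real.rpow_le_rpow_iff (schattenQuasinorm_nonneg p _) (by positivity) hp0]
  simpa using schattenQuasinorm_sum_rankOne_rpow_le (𝕜 := 𝕜) hp0 hp1 {()} (fun _ => x) fun _ => y

theorem schattenQuasinorm_sum_rpow_le {p : ℝ} (hp0 : 0 < p) (hp1 : p ≤ 1) {ι : Type*}
    (S : Finset ι) (A : ι → E →L[𝕜] F) :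
    schattenQuasinorm p (∑ i ∈ S, A i) ^ p ≤ ∑ i ∈ S, schattenQuasinorm p (A i) ^ p := by
  choose u v hu hv svd using fun i => exists_orthonormal_eq_sum_singularValues_smul_rankOne (A i)
  let σ (i : ι) (k : ℕ) : ℝ := (A i).toLinearMap.singularValues k
  have σ_nonneg (i : ι) (k : ℕ) : 0 ≤ σ i k := (A i).toLinearMap.singularValues_nonneg k
  let terms : Finset (Σ i, Fin (finrank 𝕜 (A i).toLinearMap.range)) := S.sigma fun _ => .univ
  let x (q : Σ i, Fin (finrank 𝕜 (A i).toLinearMap.range)) : F := (σ q.1 q.2 : 𝕜) • u q.1 q.2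
  let y (q : Σ i, Fin (finrank 𝕜 (A i).toLinearMap.range)) : E := v q.1 q.2
  have sum_eq : ∑ i ∈ S, A i = ∑ q ∈ terms, rankOne 𝕜 (x q) (y q) := by
    rw [Finset.sum_sigma]
    refine Finset.sum_congr rfl fun i _ => ?_
    simpa [x, y] using svd i
  have norm_mul_norm (i : ι) (k) : ‖x ⟨i, k⟩‖ * ‖y ⟨i, k⟩‖ = σ i k := by
    rw [norm_smul, RCLike.norm_of_nonneg (σ_nonneg i k), (hu i).norm_eq_one k,
      (hv i).norm_eq_one k, mul_one, mul_one]
  calc schattenQuasinorm p (∑ i ∈ S, A i) ^ p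
      ≤ ∑ q ∈ terms, (‖x q‖ * ‖y q‖) ^ p :=
        sum_eq ▸ schattenQuasinorm_sum_rankOne_rpow_le hp0 hp1 terms x y
    _ = ∑ i ∈ S, ∑ k : Fin (finrank 𝕜 (A i).toLinearMap.range), σ i k ^ p := by
        rw [Finset.sum_sigma]
        simp only [norm_mul_norm]
    _ = ∑ i ∈ S, schattenQuasinorm p (A i) ^ p := by
        refine Finset.sum_congr rfl fun i _ => ?_
        rw [schattenQuasinorm_rpow hp0.ne',
          sum_range_finrank_singularValues (A i) (f := (· ^ p)) (Real.zero_rpow hp0.ne')]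

variable {E' F' : Type*}
  [NormedAddCommGroup E'] [InnerProductSpace 𝕜 E'] [FiniteDimensional 𝕜 E']
  [NormedAddCommGroup F'] [InnerProductSpace 𝕜 F'] [FiniteDimensional 𝕜 F']

lemma schattenQuasinorm_map_le {p : ℝ} (hp0 : 0 < p) (hp1 : p ≤ 1)
    (Φ : (E →L[𝕜] F) →ₗ[𝕜] (E' →L[𝕜] F')) {K : ℝ} (hK0 : 0 ≤ K)
    (hK : ∀ (ξ : F) (η : E), ‖ξ‖ = 1 → ‖η‖ = 1 → schattenQuasinorm p (Φ (rankOne 𝕜 ξ η)) ≤ K)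
    (T : E →L[𝕜] F) :
    schattenQuasinorm p (Φ T) ≤ K * schattenQuasinorm p T := by
  obtain ⟨u, v, hu, hv, svd⟩ := exists_orthonormal_eq_sum_singularValues_smul_rankOne T
  set σ := T.toLinearMap.singularValues
  have σ_nonneg (k : ℕ) : 0 ≤ σ k := T.toLinearMap.singularValues_nonneg k
  have term_le (k : Fin (finrank 𝕜 T.toLinearMap.range)) :
      schattenQuasinorm p ((σ k : 𝕜) • Φ (rankOne 𝕜 (u k) (v k))) ≤ σ k * K := by
    rw [schattenQuasinorm_smul hp0.ne', RCLike.norm_of_nonneg (σ_nonneg k)]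
    exact mul_le_mul_of_nonneg_left (hK _ _ (hu.norm_eq_one k) (hv.norm_eq_one k)) (σ_nonneg k)
  rw [← Real.rpow_le_rpow_iff (schattenQuasinorm_nonneg p _)
    (mul_nonneg hK0 (schattenQuasinorm_nonneg p T)) hp0]
  calc schattenQuasinorm p (Φ T) ^ p
      = schattenQuasinorm p (∑ k : Fin (finrank 𝕜 T.toLinearMap.range),
          (σ k : 𝕜) • Φ (rankOne 𝕜 (u k) (v k))) ^ p := by
        conv_lhs => rw [svd, map_sum]
        simp only [map_smul]
    _ ≤ ∑ k : Fin (finrank 𝕜 T.toLinearMap.range),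
          schattenQuasinorm p ((σ k : 𝕜) • Φ (rankOne 𝕜 (u k) (v k))) ^ p :=
        schattenQuasinorm_sum_rpow_le hp0 hp1 _ _
    _ ≤ ∑ k : Fin (finrank 𝕜 T.toLinearMap.range), (σ k * K) ^ p :=
        Finset.sum_le_sum fun k _ =>
          Real.rpow_le_rpow (schattenQuasinorm_nonneg p _) (term_le k) hp0.le
    _ = (K * schattenQuasinorm p T) ^ p := by
        rw [Real.mul_rpow hK0 (schattenQuasinorm_nonneg p T), schattenQuasinorm_rpow hp0.ne',
          sum_range_finrank_singularValues T (f := (· ^ p)) (Real.zero_rpow hp0.ne'),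
          Finset.mul_sum]
        exact Finset.sum_congr rfl fun k _ => by rw [mul_comm, Real.mul_rpow hK0 (σ_nonneg k)]

lemma bddAbove_schattenQuasinorm_map_rankOne {p : ℝ} (hp : 0 < p)
    (Φ : (E →L[𝕜] F) →ₗ[𝕜] (E' →L[𝕜] F')) :
    BddAbove {x : ℝ | ∃ (ξ : F) (η : E), ‖ξ‖ = 1 ∧ ‖η‖ = 1 ∧
      x = schattenQuasinorm p (Φ (rankOne 𝕜 ξ η))} := by
  refine ⟨(finrank 𝕜 E' : ℝ) ^ (1 / p) * ‖LinearMap.toContinuousLinearMap Φ‖, ?_⟩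
  rintro _ ⟨ξ, η, hξ, hη, rfl⟩
  calc schattenQuasinorm p (Φ (rankOne 𝕜 ξ η))
      ≤ (finrank 𝕜 E' : ℝ) ^ (1 / p) * ‖Φ (rankOne 𝕜 ξ η)‖ :=
        schattenQuasinorm_le_finrank_rpow_mul_norm hp _
    _ ≤ (finrank 𝕜 E' : ℝ) ^ (1 / p) * ‖LinearMap.toContinuousLinearMap Φ‖ := by
        gcongr
        simpa [hξ, hη] using (LinearMap.toContinuousLinearMap Φ).le_opNorm (rankOne 𝕜 ξ η)

theorem matrix_schur_rank_one_general {p : ℝ} (hp0 : 0 < p) (hp1 : p ≤ 1)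
    (Φ : (E →L[𝕜] F) →ₗ[𝕜] (E' →L[𝕜] F')) :
    sSup {x : ℝ | ∃ T : E →L[𝕜] F, schattenQuasinorm p T ≤ 1 ∧ x = schattenQuasinorm p (Φ T)} =
      sSup {x : ℝ | ∃ (ξ : F) (η : E), ‖ξ‖ = 1 ∧ ‖η‖ = 1 ∧
        x = schattenQuasinorm p (Φ (rankOne 𝕜 ξ η))} := by
  set onUnitBall := {x : ℝ | ∃ T : E →L[𝕜] F, schattenQuasinorm p T ≤ 1 ∧
    x = schattenQuasinorm p (Φ T)}
  set onRankOne := {x : ℝ | ∃ (ξ : F) (η : E), ‖ξ‖ = 1 ∧ ‖η‖ = 1 ∧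
    x = schattenQuasinorm p (Φ (rankOne 𝕜 ξ η))}
  have onRankOne_nonneg : 0 ≤ sSup onRankOne := Real.sSup_nonneg <| by
    rintro _ ⟨ξ, η, -, -, rfl⟩
    exact schattenQuasinorm_nonneg p _
  have onUnitBall_le : ∀ x ∈ onUnitBall, x ≤ sSup onRankOne := by
    rintro _ ⟨T, hT, rfl⟩
    calc schattenQuasinorm p (Φ T)
        ≤ sSup onRankOne * schattenQuasinorm p T :=
          schattenQuasinorm_map_le hp0 hp1 Φ onRankOne_nonneg (fun ξ η hξ hη =>
            le_csSup (bddAbove_schattenQuasinorm_map_rankOne hp0 Φ) ⟨ξ, η, hξ, hη, rfl⟩) T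
      _ ≤ sSup onRankOne := mul_le_of_le_one_right onRankOne_nonneg hT
  have onRankOne_subset : onRankOne ⊆ onUnitBall := by
    rintro _ ⟨ξ, η, hξ, hη, rfl⟩
    refine ⟨rankOne 𝕜 ξ η, ?_, rfl⟩
    simpa [hξ, hη] using schattenQuasinorm_rankOne_le (𝕜 := 𝕜) hp0 hp1 ξ η
  have onUnitBall_nonneg : 0 ≤ sSup onUnitBall := Real.sSup_nonneg <| by
    rintro _ ⟨T, -, rfl⟩
    exact schattenQuasinorm_nonneg p _
  exact le_antisymm (Real.sSup_le onUnitBall_le onRankOne_nonneg)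
    (Real.sSup_le (fun x hx => le_csSup ⟨_, onUnitBall_le⟩ (onRankOne_subset hx))
      onUnitBall_nonneg)

end SchattenQuasinorm

section SchurMultiplier

open Matrix Module InnerProductSpace

variable {𝕜 ι : Type*} [RCLike 𝕜] [Fintype ι] [DecidableEq ι]

/-- Schur multiplication by `M`, acting on operators through their matrix entries. -/
def schurMultiplier (M : Matrix ι ι 𝕜) :
    (EuclideanSpace 𝕜 ι →L[𝕜] EuclideanSpace 𝕜 ι) →ₗ[𝕜]
      (EuclideanSpace 𝕜 ι →L[𝕜] EuclideanSpace 𝕜 ι) where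
  toFun T := toEuclideanCLM (𝕜 := 𝕜) (M ⊙ (toEuclideanCLM (𝕜 := 𝕜)).symm T)
  map_add' S T := by rw [map_add, hadamard_add, map_add]
  map_smul' c T := by rw [map_smul, hadamard_smul, map_smul, RingHom.id_apply]

lemma schurMultiplier_toEuclideanCLM (M A : Matrix ι ι 𝕜) :
    schurMultiplier M (toEuclideanCLM (𝕜 := 𝕜) A) = toEuclideanCLM (𝕜 := 𝕜) (M ⊙ A) := by
  rw [schurMultiplier, LinearMap.coe_mk, AddHom.coe_mk, StarAlgEquiv.symm_apply_apply]

lemma toEuclideanCLM_of_mul_conj (ξ η : EuclideanSpace 𝕜 ι) :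
    toEuclideanCLM (𝕜 := 𝕜) (of fun i j => ξ i * (starRingEnd 𝕜) (η j)) = rankOne 𝕜 ξ η := by
  refine ContinuousLinearMap.coe_injective ?_
  rw [coe_toEuclideanCLM_eq_toEuclideanLin, ← LinearEquiv.eq_symm_apply,
    symm_toEuclideanLin_rankOne]
  rfl

lemma rank_eq_finrank_range_toEuclideanCLM (A : Matrix ι ι 𝕜) :
    A.rank = finrank 𝕜 (toEuclideanCLM (𝕜 := 𝕜) A).toLinearMap.range := by
  rw [coe_toEuclideanCLM_eq_toEuclideanLin, toEuclideanLin_eq_toLin_orthonormal]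
  exact A.rank_eq_finrank_range_toLin _ _

lemma muM_eq_singularValues {n : ℕ} (A : Matrix (Fin n) (Fin n) ℂ) (j : ℕ) :
    muM A j = (toEuclideanCLM (𝕜 := ℂ) A).toLinearMap.singularValues j := by
  rw [← (isLeast_norm_sub_singularValues (toEuclideanCLM (𝕜 := ℂ) A) j).csInf_eq, muM]
  simp only [(EquivLike.surjective (toEuclideanCLM (n := Fin n) (𝕜 := ℂ))).exists, map_sub,
    rank_eq_finrank_range_toEuclideanCLM]

lemma schattenM_eq_schattenQuasinorm {n : ℕ} (p : ℝ) (A : Matrix (Fin n) (Fin n) ℂ) :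
    schattenM p A = schattenQuasinorm p (toEuclideanCLM (𝕜 := ℂ) A) := by
  simp only [schattenM, schattenQuasinorm, finrank_euclideanSpace_fin, muM_eq_singularValues]

end SchurMultiplier

/-- Matrix rank-one reduction: for `0 < p ≤ 1`, the Schur multiplier norm
`‖M‖_{M_p} = sup{‖M∘A‖_p : ‖A‖_p ≤ 1}` equals the supremum of `‖M∘(ξη*)‖_p`
over unit vectors `ξ, η ∈ ℂⁿ`. -/
theorem matrix_schur_rank_one (n : ℕ) (p : ℝ) (hp0 : 0 < p) (hp1 : p ≤ 1)
    (M : Matrix (Fin n) (Fin n) ℂ) :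
    sSup {x : ℝ | ∃ A : Matrix (Fin n) (Fin n) ℂ, schattenM p A ≤ 1 ∧
        x = schattenM p (Matrix.hadamard M A)} =
      sSup {x : ℝ | ∃ ξ η : EuclideanSpace ℂ (Fin n), ‖ξ‖ = 1 ∧ ‖η‖ = 1 ∧
        x = schattenM p (Matrix.hadamard M
          (Matrix.of fun i j => ξ i * (starRingEnd ℂ) (η j)))} := by
  have schur := matrix_schur_rank_one_general hp0 hp1 (schurMultiplier M)
  simp only [(EquivLike.surjective (Matrix.toEuclideanCLM (n := Fin n) (𝕜 := ℂ))).exists,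
    ← toEuclideanCLM_of_mul_conj, schurMultiplier_toEuclideanCLM,
    ← schattenM_eq_schattenQuasinorm] at schur
  exact schur
end
end
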